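/- arXiv:1805.02018 — 4 statements merged into one kernel-verified Lean document; each statement's English description precedes it below -/
import Mathlib

section
/- Let A_s and A_e be n×n Hermitian matrices and set Λ_s = {(A_s x, x) : x ∈ ℂ^n} and Λ_e = {(A_e x, x) : x ∈ ℂ^n}, which are Lagrangian subspaces of (ℂ^{2n}, ω). Then m⁺(𝔔(Λ_s, Λ_e; Λ^n_D)) = m⁺(A_e − A_s), and consequently i(Gr(I_{2n}), Λ_s⊕Λ_e, Λ_D) = n + m⁺(A_e − A_s), where m⁺(A_e − A_s) is the number of positive eigenvalues of A_e − A_s counted with multiplicity. -/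
open Matrix Module Submodule

noncomputable section

/-- `ℂ^{2n}`, indexed by `Fin n ⊕ Fin n` (the two `n`-blocks). -/
abbrev CV (n : ℕ) := (Fin n ⊕ Fin n) → ℂ

/-- The standard Hermitian inner product `⟨x,y⟩ = ∑ xᵢ conj(yᵢ)`. -/
def herm {m : Type*} [Fintype m] (x y : m → ℂ) : ℂ :=
  ∑ i, x i * (starRingEnd ℂ) (y i)

/-- The standard complex symplectic form `ω(x,y) = ⟨Jx, y⟩` on `ℂ^{2n}`,
where `J = [[0,-I],[I,0]]`. -/
def symForm (n : ℕ) (x y : CV n) : ℂ :=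
  herm ((Matrix.J (Fin n) ℂ).mulVec x) y

/-- The symplectic form `-ω ⊕ ω` on `ℂ^{2n} ⊕ ℂ^{2n}`. -/
def symForm2 (n : ℕ) (p q : CV n × CV n) : ℂ :=
  - symForm n p.1 q.1 + symForm n p.2 q.2

/-- A Lagrangian subspace of a complex symplectic space: `ω` vanishes on it and
it has (half) dimension `m`. -/
def IsLagrangian {X : Type*} [AddCommGroup X] [Module ℂ X]
    (w : X → X → ℂ) (m : ℕ) (Λ : Submodule ℂ X) : Prop :=
  (∀ x ∈ Λ, ∀ y ∈ Λ, w x y = 0) ∧ Module.finrank ℂ Λ = m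

/-- `m⁺(𝔔(α,β;κ))`: the dimension of a maximal subspace of `α ∩ (β + κ)` on which
the form `𝔔(x₁,x₂) = ω(y₁,z₂)` (with `x_j = y_j + z_j`, `y_j ∈ β`, `z_j ∈ κ`) is
positive definite. -/
def posInd {X : Type*} [AddCommGroup X] [Module ℂ X]
    (w : X → X → ℂ) (α β κ : Submodule ℂ X) : ℕ :=
  sSup {k : ℕ | ∃ P : Submodule ℂ X, P ≤ α ⊓ (β ⊔ κ) ∧
    (∀ x ∈ P, x ≠ 0 → ∀ y ∈ β, ∀ z ∈ κ, x = y + z → 0 < (w y z).re) ∧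
    k = Module.finrank ℂ P}

/-- The triple index `i(α,β,κ) = m⁺(𝔔(α,β;κ)) + dim(α∩κ) − dim(α∩β∩κ)`. -/
def tripleIdx {X : Type*} [AddCommGroup X] [Module ℂ X]
    (w : X → X → ℂ) (α β κ : Submodule ℂ X) : ℕ :=
  posInd w α β κ + Module.finrank ℂ ↥(α ⊓ κ) - Module.finrank ℂ ↥(α ⊓ β ⊓ κ)

/-- `Λ^n_D = ℂ^n ⊕ {0}`, the Dirichlet Lagrangian (second block vanishes). -/
def LnD (n : ℕ) : Submodule ℂ (CV n) :=
  LinearMap.ker (LinearMap.funLeft ℂ ℂ (Sum.inr : Fin n → Fin n ⊕ Fin n))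

/-- `Λ^n_N = {0} ⊕ ℂ^n`, the Neumann Lagrangian (first block vanishes). -/
def LnN (n : ℕ) : Submodule ℂ (CV n) :=
  LinearMap.ker (LinearMap.funLeft ℂ ℂ (Sum.inl : Fin n → Fin n ⊕ Fin n))

/-- `Λ_D = Λ^n_D ⊕ Λ^n_D ⊂ ℂ^{4n}`. -/
def LD (n : ℕ) : Submodule ℂ (CV n × CV n) := (LnD n).prod (LnD n)

/-- `Λ_N = Λ^n_N ⊕ Λ^n_N ⊂ ℂ^{4n}`. -/
def LN (n : ℕ) : Submodule ℂ (CV n × CV n) := (LnN n).prod (LnN n)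

/-- The Lagrangian subspace `{(A x, x) : x ∈ ℂ^n}` of `ℂ^{2n}` associated to a
Hermitian matrix `A`. -/
def graphLag (n : ℕ) (A : Matrix (Fin n) (Fin n) ℂ) : Submodule ℂ (CV n) :=
  LinearMap.range
    ((LinearEquiv.sumArrowLequivProdArrow (Fin n) (Fin n) ℂ ℂ).symm.toLinearMap ∘ₗ
      (A.mulVecLin.prod LinearMap.id))

/-!
Each of `Λ_s` and `Λ_e` is a complement of `Λ^n_D`. Write `x ∈ Λ_s` with second block `u` as
`x = y + z` with `y ∈ Λ_e` and `z ∈ Λ^n_D`: then `y = (A_e u, u)`, `z = (-(A_e - A_s) u, 0)` and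
`ω(y, z) = ⟨u, (A_e - A_s) u⟩`, a form whose positive index is read off in an eigenbasis.

For the triple index, write `x = b + d = c + d'` with `b ∈ Λ_s`, `c ∈ Λ_e` and `d, d' ∈ Λ^n_D`. As
`ω` vanishes on `Λ^n_D`, the form at `(x, x)` is `-ω(b, d) + ω(c, d') = ω(c, d' - d)`, and
`b = c + (d' - d)`, so this is the value of `𝔔(Λ_s, Λ_e; Λ^n_D)` at `b`. The form on the diagonal is
thus pulled back along the surjection `(x, x) ↦ b`, which does not change the positive index.
-/

section PosIndex

/-- The positive index of inertia of a function `q` (in practice the diagonal of a Hermitian form):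
the maximal dimension of a subspace on which `q` is positive away from `0`. As `sSup` is taken in
`ℕ`, it is `0` when these dimensions are unbounded. -/
def posIndex (𝕜 : Type*) {V : Type*} [DivisionRing 𝕜] [AddCommGroup V] [Module 𝕜 V]
    (q : V → ℝ) : ℕ :=
  sSup {k : ℕ | ∃ P : Submodule 𝕜 V, (∀ x ∈ P, x ≠ 0 → 0 < q x) ∧ k = finrank 𝕜 P}

variable {𝕜 V W : Type*}

theorem posIndex_comp_of_surjective [DivisionRing 𝕜] [AddCommGroup V] [Module 𝕜 V]
    [AddCommGroup W] [Module 𝕜 W] {g : V →ₗ[𝕜] W} (hg : Function.Surjective g) {q : W → ℝ}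
    (hq : q 0 ≤ 0) : posIndex 𝕜 (q ∘ g) = posIndex 𝕜 q := by
  refine congrArg sSup (Set.ext fun k ↦ ⟨?_, ?_⟩)
  · rintro ⟨P, hP, rfl⟩
    have g_injective : Function.Injective (g ∘ₗ P.subtype) := by
      refine (injective_iff_map_eq_zero _).2 fun x hx ↦ ?_
      by_contra hne
      refine (hP x x.2 (by simpa using hne)).not_ge ?_
      rwa [Function.comp_apply, show g x = 0 from hx]
    refine ⟨LinearMap.range (g ∘ₗ P.subtype), ?_,
      (LinearMap.finrank_range_of_inj g_injective).symm⟩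
    rintro _ ⟨x, rfl⟩ hx
    exact hP x x.2 fun h ↦ hx (by simp [h])
  · rintro ⟨P, hP, rfl⟩
    obtain ⟨s, hs⟩ := g.exists_rightInverse_of_surjective (LinearMap.range_eq_top.2 hg)
    have hgs : Function.LeftInverse g s := LinearMap.congr_fun hs
    refine ⟨LinearMap.range (s ∘ₗ P.subtype), ?_,
      (LinearMap.finrank_range_of_inj
        (hgs.injective.comp Subtype.val_injective : Function.Injective (s ∘ₗ P.subtype))).symm⟩
    rintro _ ⟨x, rfl⟩ hx
    rw [Function.comp_apply, LinearMap.comp_apply, hgs]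
    exact hP x x.2 fun h ↦ hx (by simp [h])

theorem posIndex_sum_mul_norm_sq {ι : Type*} [NormedField 𝕜] [Fintype ι] (d : ι → ℝ) :
    posIndex 𝕜 (fun u : ι → 𝕜 ↦ ∑ i, d i * ‖u i‖ ^ 2) = Fintype.card {i // 0 < d i} := by
  refine IsGreatest.csSup_eq ⟨⟨Pi.spanSubset 𝕜 {i | 0 < d i}, fun u hu hne ↦ ?_, ?_⟩, ?_⟩
  · have u_eq_zero : ∀ i, ¬ 0 < d i → u i = 0 := Pi.mem_spanSubset_iff.1 hu
    obtain ⟨i, hi⟩ := Function.ne_iff.1 hne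
    have hdi : 0 < d i := not_not.1 fun h ↦ hi (u_eq_zero i h)
    refine Finset.sum_pos' (fun j _ ↦ ?_)
      ⟨i, Finset.mem_univ i, mul_pos hdi (pow_pos (norm_pos_iff.2 hi) 2)⟩
    by_cases hj : 0 < d j
    · positivity
    · simp [u_eq_zero j hj]
  · rw [Pi.dim_spanSubset, ← Nat.card_coe_set_eq, ← Nat.card_eq_fintype_card]
    rfl
  · rintro _ ⟨P, hP, rfl⟩
    let restrict : P →ₗ[𝕜] {i // 0 < d i} → 𝕜 := LinearMap.funLeft 𝕜 𝕜 Subtype.val ∘ₗ P.subtype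
    have restrict_injective : Function.Injective restrict := by
      refine (injective_iff_map_eq_zero _).2 fun u hu ↦ ?_
      by_contra hne
      refine (hP u u.2 (by simpa using hne)).not_ge (Finset.sum_nonpos fun i _ ↦ ?_)
      by_cases hi : 0 < d i
      · have hui : (u : ι → 𝕜) i = 0 := congrFun hu ⟨i, hi⟩
        simp [hui]
      · exact mul_nonpos_of_nonpos_of_nonneg (not_lt.1 hi) (sq_nonneg _)
    simpa using LinearMap.finrank_le_finrank_of_injective restrict_injective

section Hermitian

variable {ι : Type*} [RCLike 𝕜] [Fintype ι] [DecidableEq ι] {A : Matrix ι ι 𝕜}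

theorem re_star_dotProduct_mulVec_eq_sum_eigenvalues (hA : A.IsHermitian) (u : ι → 𝕜) :
    RCLike.re (star u ⬝ᵥ A *ᵥ u) =
      ∑ i, hA.eigenvalues i * ‖((hA.eigenvectorUnitary : Matrix ι ι 𝕜)ᴴ *ᵥ u) i‖ ^ 2 := by
  set U := (hA.eigenvectorUnitary : Matrix ι ι 𝕜)
  set v := Uᴴ *ᵥ u
  set D : Matrix ι ι 𝕜 := diagonal (RCLike.ofReal ∘ hA.eigenvalues) with hD
  have diagonalized : star u ⬝ᵥ A *ᵥ u = star v ⬝ᵥ D *ᵥ v := calc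
    _ = star u ⬝ᵥ (U * D * Uᴴ) *ᵥ u := congrArg (star u ⬝ᵥ · *ᵥ u) hA.spectral_theorem
    _ = star v ⬝ᵥ D *ᵥ v := by
      rw [star_mulVec, conjTranspose_conjTranspose, ← dotProduct_mulVec, mulVec_mulVec,
        mulVec_mulVec, Matrix.mul_assoc]
  rw [diagonalized, dotProduct, map_sum]
  refine Finset.sum_congr rfl fun i _ ↦ ?_
  rw [hD, mulVec_diagonal, Pi.star_apply, Function.comp_apply, mul_left_comm, RCLike.re_ofReal_mul,
    RCLike.star_def, RCLike.conj_mul]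
  norm_cast

theorem posIndex_re_star_dotProduct_mulVec (hA : A.IsHermitian) :
    posIndex 𝕜 (fun u ↦ RCLike.re (star u ⬝ᵥ A *ᵥ u)) =
      Fintype.card {i // 0 < hA.eigenvalues i} := by
  set U := (hA.eigenvectorUnitary : Matrix ι ι 𝕜) with hU
  have conjTranspose_surjective : Function.Surjective Uᴴ.mulVecLin := fun v ↦
    ⟨U *ᵥ v, by
      rw [mulVecLin_apply, mulVec_mulVec, ← star_eq_conjTranspose, hU,
        Unitary.coe_star_mul_self, one_mulVec]⟩
  simp only [re_star_dotProduct_mulVec_eq_sum_eigenvalues hA]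
  rw [← posIndex_sum_mul_norm_sq (𝕜 := 𝕜)]
  exact posIndex_comp_of_surjective conjTranspose_surjective
    (q := fun v ↦ ∑ i, hA.eigenvalues i * ‖v i‖ ^ 2) (by simp)

end Hermitian

end PosIndex

section Complements

variable {R V W : Type*} [Ring R] [AddCommGroup V] [Module R V] [AddCommGroup W] [Module R W]

theorem projection_add_of_mem {p q : Submodule R V} (h : IsCompl p q) {x y : V} (hx : x ∈ p)
    (hy : y ∈ q) : p.projection q h (x + y) = x := by
  rw [map_add, projection_apply_of_mem_left h hx, projection_apply_of_mem_right h hy, add_zero]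

theorem isCompl_range_ker_of_comp_eq_id {f : V →ₗ[R] W} {s : W →ₗ[R] V}
    (h : f ∘ₗ s = LinearMap.id) : IsCompl (LinearMap.range s) (LinearMap.ker f) := by
  have hfs : Function.LeftInverse f s := LinearMap.congr_fun h
  have idempotent : IsIdempotentElem (s ∘ₗ f) :=
    LinearMap.ext fun x ↦ congrArg s (hfs (f x))
  have isCompl_range_ker := LinearMap.IsIdempotentElem.isCompl idempotent
  rwa [LinearMap.range_comp_of_range_eq_top s (LinearMap.range_eq_top.2 hfs.surjective),
    LinearMap.ker_comp_of_ker_eq_bot f (LinearMap.ker_eq_bot.2 hfs.injective)] at isCompl_range_ker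

theorem isCompl_prod {p p' : Submodule R V} {q q' : Submodule R W} (hp : IsCompl p p')
    (hq : IsCompl q q') : IsCompl (p.prod q) (p'.prod q') :=
  IsCompl.of_eq (by rw [prod_inf_prod, hp.inf_eq_bot, hq.inf_eq_bot, prod_bot])
    (by rw [prod_sup_prod, hp.sup_eq_top, hq.sup_eq_top, prod_top])

theorem finrank_graph_id_inf_prod (p : Submodule R V) :
    finrank R ↥(LinearMap.graph (LinearMap.id : V →ₗ[R] V) ⊓ p.prod p) = finrank R p := by
  let diag : p →ₗ[R] V × V := p.subtype.prod p.subtype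
  have diag_injective : Function.Injective diag :=
    fun x y hxy ↦ Subtype.ext (congrArg Prod.fst hxy)
  have eq_range : LinearMap.graph LinearMap.id ⊓ p.prod p = LinearMap.range diag := by
    ext ⟨x, y⟩
    constructor
    · rintro ⟨hxy, hx, -⟩
      exact ⟨⟨x, hx⟩, Prod.ext rfl hxy.symm⟩
    · rintro ⟨z, hz⟩
      obtain ⟨rfl, rfl⟩ := Prod.mk.inj hz
      exact ⟨rfl, z.2, z.2⟩
  rw [eq_range, LinearMap.finrank_range_of_inj diag_injective]

end Complements

section TripleIndex

variable {X : Type*} [AddCommGroup X] [Module ℂ X] {w : X → X → ℂ}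

theorem posInd_eq_posIndex {α β κ : Submodule ℂ X} (hα : α ≤ β ⊔ κ) {q : α → ℝ}
    (hq : ∀ x : α, ∀ y ∈ β, ∀ z ∈ κ, (x : X) = y + z → (w y z).re = q x) :
    posInd w α β κ = posIndex ℂ q := by
  refine congrArg sSup (Set.ext fun k ↦ ⟨?_, ?_⟩)
  · rintro ⟨P, hPα, hP, rfl⟩
    have hP_le : P ≤ α := hPα.trans inf_le_left
    refine ⟨P.comap α.subtype, fun x hx hne ↦ ?_,
      (Submodule.comapSubtypeEquivOfLe hP_le).finrank_eq.symm⟩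
    obtain ⟨y, hy, z, hz, hyz⟩ := Submodule.mem_sup.1 (hα x.2)
    rw [← hq x y hy z hz hyz.symm]
    exact hP x hx (by simpa using hne) y hy z hz hyz.symm
  · rintro ⟨P, hP, rfl⟩
    refine ⟨P.map α.subtype, (Submodule.map_subtype_le α P).trans (le_inf le_rfl hα), ?_,
      (Submodule.finrank_map_subtype_eq α P).symm⟩
    rintro _ ⟨x, hx, rfl⟩ hne y hy z hz hyz
    rw [hq x y hy z hz hyz]
    exact hP x hx fun h ↦ hne (by simp [h])

theorem posInd_eq_posIndex_projection (w : X → X → ℂ) (α : Submodule ℂ X) {β κ : Submodule ℂ X}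
    (h : IsCompl β κ) :
    posInd w α β κ =
      posIndex ℂ fun x : α ↦ (w (β.projection κ h x) (κ.projection β h.symm x)).re := by
  refine posInd_eq_posIndex (h.sup_eq_top ▸ le_top) fun x y hy z hz hyz ↦ ?_
  rw [hyz, projection_add_of_mem h hy hz, add_comm, projection_add_of_mem h.symm hz hy]

variable {β γ δ : Submodule ℂ X}

theorem neg_form_add_form_eq_of_add_eq_add (w_add_left : ∀ x y z, w (x + y) z = w x z + w y z)
    (w_add_right : ∀ x y z, w x (y + z) = w x y + w x z)
    (w_isotropic : ∀ x ∈ δ, ∀ y ∈ δ, w x y = 0) {b c d d' : X} (hd : d ∈ δ) (hd' : d' ∈ δ)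
    (h : b + d = c + d') : -w b d + w c d' = w c (d' - d) := by
  have hc : w c d = w b d := by
    rw [show c = b + (d - d') by rw [← add_sub_assoc, h, add_sub_cancel_right], w_add_left,
      w_isotropic _ (δ.sub_mem hd hd') d hd, add_zero]
  have hd'_split : w c d' = w c (d' - d) + w c d := by rw [← w_add_right, sub_add_cancel]
  rw [hd'_split, hc]
  ring

theorem posInd_graph_id_prod (hβ : IsCompl β δ) (hγ : IsCompl γ δ)
    (w_add_left : ∀ x y z, w (x + y) z = w x z + w y z)
    (w_add_right : ∀ x y z, w x (y + z) = w x y + w x z)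
    (w_isotropic : ∀ x ∈ δ, ∀ y ∈ δ, w x y = 0) :
    posInd (fun p q : X × X ↦ -w p.1 q.1 + w p.2 q.2) (LinearMap.graph LinearMap.id)
      (β.prod γ) (δ.prod δ) = posInd w β γ δ := by
  let toβ : LinearMap.graph (LinearMap.id : X →ₗ[ℂ] X) →ₗ[ℂ] β :=
    β.projectionOnto δ hβ ∘ₗ LinearMap.fst ℂ X X ∘ₗ Submodule.subtype _
  have toβ_surjective : Function.Surjective toβ := fun b ↦
    ⟨⟨(b, b), rfl⟩, projectionOnto_apply_left hβ b⟩
  rw [posInd_eq_posIndex_projection w β hγ, ← posIndex_comp_of_surjective toβ_surjective]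
  · refine posInd_eq_posIndex ((isCompl_prod hβ hγ).sup_eq_top ▸ le_top) ?_
    rintro ⟨⟨x, x'⟩, hxx'⟩ ⟨b, c⟩ ⟨hb, hc⟩ ⟨d, d'⟩ ⟨hd, hd'⟩ hx
    obtain ⟨x_eq, x'_eq⟩ : x = b + d ∧ x' = c + d' := Prod.mk.inj hx
    have sums_eq : b + d = c + d' := by
      rw [← x_eq, ← x'_eq]
      exact ((LinearMap.mem_graph_iff _ _).1 hxx').symm
    have b_eq : b = c + (d' - d) := by rw [← add_sub_assoc, ← sums_eq, add_sub_cancel_right]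
    have toβ_eq : (toβ ⟨(x, x'), hxx'⟩ : X) = b :=
      (congrArg (β.projection δ hβ) x_eq).trans (projection_add_of_mem hβ hb hd)
    have hd'd : d' - d ∈ δ := δ.sub_mem hd' hd
    simp only [Function.comp_apply, toβ_eq]
    rw [neg_form_add_form_eq_of_add_eq_add w_add_left w_add_right w_isotropic hd hd' sums_eq, b_eq,
      projection_add_of_mem hγ hc hd'd, add_comm c, projection_add_of_mem hγ.symm hd'd hc]
  · simp [w_isotropic 0 δ.zero_mem 0 δ.zero_mem]

theorem tripleIdx_graph_id_prod (hβ : IsCompl β δ) (hγ : IsCompl γ δ)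
    (w_add_left : ∀ x y z, w (x + y) z = w x z + w y z)
    (w_add_right : ∀ x y z, w x (y + z) = w x y + w x z)
    (w_isotropic : ∀ x ∈ δ, ∀ y ∈ δ, w x y = 0) :
    tripleIdx (fun p q : X × X ↦ -w p.1 q.1 + w p.2 q.2) (LinearMap.graph LinearMap.id)
      (β.prod γ) (δ.prod δ) = finrank ℂ δ + posInd w β γ δ := by
  have triple_inf : LinearMap.graph (LinearMap.id : X →ₗ[ℂ] X) ⊓ β.prod γ ⊓ δ.prod δ = ⊥ := by
    rw [inf_assoc, (isCompl_prod hβ hγ).inf_eq_bot, inf_bot_eq]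
  rw [tripleIdx, posInd_graph_id_prod hβ hγ w_add_left w_add_right w_isotropic, triple_inf,
    finrank_bot, finrank_graph_id_inf_prod, Nat.sub_zero, add_comm]

end TripleIndex

section GraphLag

variable {n : ℕ}

theorem herm_eq_star_dotProduct {ι : Type*} [Fintype ι] (x y : ι → ℂ) :
    herm x y = star y ⬝ᵥ x := dotProduct_comm _ _

theorem symForm_eq_sub (x y : CV n) :
    symForm n x y = herm (x ∘ Sum.inl) (y ∘ Sum.inr) - herm (x ∘ Sum.inr) (y ∘ Sum.inl) := by
  simp [symForm, herm, J, fromBlocks_mulVec, neg_mulVec, sub_eq_neg_add]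

theorem symForm_add_left (x y z : CV n) :
    symForm n (x + y) z = symForm n x z + symForm n y z := by
  simp only [symForm, herm_eq_star_dotProduct, mulVec_add, dotProduct_add]

theorem symForm_add_right (x y z : CV n) :
    symForm n x (y + z) = symForm n x y + symForm n x z := by
  simp only [symForm, herm_eq_star_dotProduct, star_add, add_dotProduct]

theorem symForm_eq_zero_of_mem_LnD {x y : CV n} (hx : x ∈ LnD n) (hy : y ∈ LnD n) :
    symForm n x y = 0 := by
  rw [symForm_eq_sub, show x ∘ Sum.inr = 0 from hx, show y ∘ Sum.inr = 0 from hy]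
  simp [herm]

theorem finrank_LnD (n : ℕ) : finrank ℂ (LnD n) = n := by
  have rank_nullity :=
    (LinearMap.funLeft ℂ ℂ (Sum.inr : Fin n → Fin n ⊕ Fin n)).finrank_range_add_finrank_ker
  rw [LinearMap.range_eq_top.2 (LinearMap.funLeft_surjective_of_injective ℂ ℂ _
    Sum.inr_injective), finrank_top] at rank_nullity
  rw [finrank_fintype_fun_eq_card, finrank_fintype_fun_eq_card, Fintype.card_sum,
    Fintype.card_fin] at rank_nullity
  exact Nat.add_left_cancel rank_nullity

theorem mem_graphLag {A : Matrix (Fin n) (Fin n) ℂ} {x : CV n} :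
    x ∈ graphLag n A ↔ x ∘ Sum.inl = A *ᵥ (x ∘ Sum.inr) := by
  refine ⟨?_, fun h ↦ ⟨x ∘ Sum.inr, ?_⟩⟩
  · rintro ⟨u, rfl⟩
    rfl
  · ext (i | i)
    exacts [(congrFun h i).symm, rfl]

theorem isCompl_graphLag_LnD (A : Matrix (Fin n) (Fin n) ℂ) : IsCompl (graphLag n A) (LnD n) :=
  isCompl_range_ker_of_comp_eq_id rfl

theorem symForm_eq_herm_sub_mulVec {As Ae : Matrix (Fin n) (Fin n) ℂ} {x y z : CV n}
    (hx : x ∈ graphLag n As) (hy : y ∈ graphLag n Ae) (hz : z ∈ LnD n) (hxyz : x = y + z) :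
    symForm n y z = herm (x ∘ Sum.inr) ((Ae - As) *ᵥ (x ∘ Sum.inr)) := by
  have hz_inr : z ∘ Sum.inr = 0 := hz
  have hy_inr : y ∘ Sum.inr = x ∘ Sum.inr := by
    rw [hxyz, Pi.add_comp, hz_inr, add_zero]
  have hz_inl : z ∘ Sum.inl = -((Ae - As) *ᵥ (x ∘ Sum.inr)) := by
    rw [eq_sub_of_add_eq' hxyz.symm, Pi.sub_comp, mem_graphLag.1 hx, mem_graphLag.1 hy, hy_inr,
      sub_mulVec, neg_sub]
  rw [symForm_eq_sub, hz_inr, hz_inl, hy_inr]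
  simp [herm]

theorem posInd_graphLag_LnD {As Ae : Matrix (Fin n) (Fin n) ℂ} (h : (Ae - As).IsHermitian) :
    posInd (symForm n) (graphLag n As) (graphLag n Ae) (LnD n) =
      Fintype.card {i // 0 < h.eigenvalues i} := by
  let snd : graphLag n As →ₗ[ℂ] Fin n → ℂ := LinearMap.funLeft ℂ ℂ Sum.inr ∘ₗ Submodule.subtype _
  have snd_surjective : Function.Surjective snd := fun u ↦ ⟨⟨_, u, rfl⟩, rfl⟩
  rw [← posIndex_re_star_dotProduct_mulVec h,
    ← posIndex_comp_of_surjective snd_surjective (by simp)]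
  refine posInd_eq_posIndex ((isCompl_graphLag_LnD Ae).sup_eq_top ▸ le_top)
    fun x y hy z hz hxyz ↦ ?_
  rw [symForm_eq_herm_sub_mulVec x.2 hy hz hxyz, herm_eq_star_dotProduct, star_dotProduct]
  rfl

end GraphLag

theorem posInd_graphLag_general {n : ℕ} {As Ae : Matrix (Fin n) (Fin n) ℂ}
    (h : (Ae - As).IsHermitian) :
    posInd (symForm n) (graphLag n As) (graphLag n Ae) (LnD n)
      = Fintype.card {i // 0 < h.eigenvalues i}
    ∧ tripleIdx (symForm2 n)
        (LinearMap.graph (LinearMap.id : CV n →ₗ[ℂ] CV n))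
        ((graphLag n As).prod (graphLag n Ae)) (LD n)
      = n + Fintype.card {i // 0 < h.eigenvalues i} := by
  refine ⟨posInd_graphLag_LnD h, ?_⟩
  calc
    _ = finrank ℂ (LnD n) + posInd (symForm n) (graphLag n As) (graphLag n Ae) (LnD n) :=
      tripleIdx_graph_id_prod (isCompl_graphLag_LnD As) (isCompl_graphLag_LnD Ae)
        symForm_add_left symForm_add_right fun _ hx _ hy ↦ symForm_eq_zero_of_mem_LnD hx hy
    _ = _ := by rw [finrank_LnD, posInd_graphLag_LnD h]

/-- For `Λ_s = {(A_s x, x)}`, `Λ_e = {(A_e x, x)}` with `A_s, A_e` Hermitian: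
`m⁺(𝔔(Λ_s,Λ_e;Λ^n_D)) = m⁺(A_e − A_s)` and
`i(Gr(I_{2n}), Λ_s⊕Λ_e, Λ_D) = n + m⁺(A_e − A_s)`. -/
theorem posInd_graphLag (n : ℕ) (As Ae : Matrix (Fin n) (Fin n) ℂ)
    (hAs : As.IsHermitian) (hAe : Ae.IsHermitian) :
    posInd (symForm n) (graphLag n As) (graphLag n Ae) (LnD n)
      = Fintype.card {i // 0 < (hAe.sub hAs).eigenvalues i}
    ∧ tripleIdx (symForm2 n)
        (LinearMap.graph (LinearMap.id : CV n →ₗ[ℂ] CV n))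
        ((graphLag n As).prod (graphLag n Ae)) (LD n)
      = n + Fintype.card {i // 0 < (hAe.sub hAs).eigenvalues i} :=
  posInd_graphLag_general (hAe.sub hAs)
end
end

section
/- Let M ∈ Sp(2n) satisfy the brake symmetry N M N = M⁻¹. If λ₁, λ₂ are eigenvalues of M (acting on ℂ^{2n} by complexification) with eigenvectors u₁ = (x₁,y₁) and u₂ = (x₂,y₂) in ℂ^n⊕ℂ^n, then at least one of the following holds: (1) λ₁ = conj(λ₂); (2) λ₁·conj(λ₂) = 1; (3) ⟨x₁, y₂⟩ = 0. -/
open Matrix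

/-!
Let `J` be the symplectic matrix and `N = diag(-1, 1)`. For a matrix `M` with `Mᴴ * J * M = J`,
pairing two eigenvectors with the form of `J` gives a number `a` with `λ₁ * conj λ₂ * a = a`. Brake
symmetry turns `Mᴴ * J = J * M⁻¹` into `Mᴴ * (J * N) = (J * N) * M`, so `M` is self-adjoint for the
form of `J * N`, and the pairing `b` of the eigenvectors in that form satisfies
`conj λ₂ * b = λ₁ * b`. If neither relation between the eigenvalues holds, then `a = b = 0`, and
`a - b = 2 * ⟨x₁, y₂⟩`. A real matrix satisfies these identities over `ℂ` as soon as it does over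
`ℝ`.
-/

section SesquilinearForm

variable {m K : Type*} [Fintype m] [CommSemiring K] [StarRing K]
  {M B : Matrix m m K} {μ ν : K} {u v : m → K}

theorem star_dotProduct_conjTranspose_mul_mulVec (hv : M *ᵥ v = ν • v) (w : m → K) :
    star v ⬝ᵥ (Mᴴ * B) *ᵥ w = star ν * (star v ⬝ᵥ B *ᵥ w) := by
  rw [← mulVec_mulVec, dotProduct_mulVec, ← star_mulVec, hv, star_smul, smul_dotProduct,
    smul_eq_mul]

variable [IsRightCancelMulZero K]

theorem mul_star_eq_one_or_star_dotProduct_mulVec_eq_zero (hB : Mᴴ * B * M = B)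
    (hu : M *ᵥ u = μ • u) (hv : M *ᵥ v = ν • v) :
    μ * star ν = 1 ∨ star v ⬝ᵥ B *ᵥ u = 0 := by
  rw [← mul_left_eq_self₀]
  calc μ * star ν * (star v ⬝ᵥ B *ᵥ u)
      = μ * (star v ⬝ᵥ (Mᴴ * B) *ᵥ u) := by
        rw [star_dotProduct_conjTranspose_mul_mulVec hv, mul_assoc]
    _ = star v ⬝ᵥ (Mᴴ * B * M) *ᵥ u := by
        rw [← mulVec_mulVec u _ M, hu, mulVec_smul, dotProduct_smul, smul_eq_mul]
    _ = star v ⬝ᵥ B *ᵥ u := by rw [hB]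

theorem eq_star_or_star_dotProduct_mulVec_eq_zero (hB : Mᴴ * B = B * M)
    (hu : M *ᵥ u = μ • u) (hv : M *ᵥ v = ν • v) :
    μ = star ν ∨ star v ⬝ᵥ B *ᵥ u = 0 := by
  rw [← mul_eq_mul_right_iff]
  calc μ * (star v ⬝ᵥ B *ᵥ u)
      = star v ⬝ᵥ (B * M) *ᵥ u := by
        rw [← mulVec_mulVec, hu, mulVec_smul, dotProduct_smul, smul_eq_mul]
    _ = star ν * (star v ⬝ᵥ B *ᵥ u) := by
        rw [← hB, star_dotProduct_conjTranspose_mul_mulVec hv]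

end SesquilinearForm

section Inverse

variable {m R S : Type*} [Fintype m] [DecidableEq m] [CommRing R] [CommRing S]
  {A B M : Matrix m m R}

theorem isUnit_det_of_mul_mul_eq (hB : IsUnit B.det) (h : A * B * M = B) : IsUnit M.det := by
  rw [← h, det_mul] at hB
  exact isUnit_of_mul_isUnit_right hB

theorem map_nonsing_inv (f : R →+* S) (hM : IsUnit M.det) : M⁻¹.map f = (M.map f)⁻¹ := by
  refine (inv_eq_left_inv ?_).symm
  rw [← Matrix.map_mul, nonsing_inv_mul M hM, Matrix.map_one f f.map_zero f.map_one]

end Inverse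

section Brake

variable {l R S : Type*} [DecidableEq l] [CommRing R] [CommRing S]

variable (l R) in
/-- The matrix `N = diag(-1, 1)` of the brake symmetry `N * M * N = M⁻¹`, with the same block
convention as `Matrix.J`. -/
def brakeReflection : Matrix (l ⊕ l) (l ⊕ l) R :=
  fromBlocks (-1) 0 0 1

theorem map_brakeReflection (f : R →+* S) :
    (brakeReflection l R).map f = brakeReflection l S := by
  simp [brakeReflection, fromBlocks_map, Matrix.map_neg]

variable [Fintype l]

theorem brakeReflection_mul_self : brakeReflection l R * brakeReflection l R = 1 := by
  simp [brakeReflection, fromBlocks_multiply]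

theorem mul_J_mul_brakeReflection {A M : Matrix (l ⊕ l) (l ⊕ l) R}
    (hJ : A * J l R * M = J l R)
    (hN : brakeReflection l R * M * brakeReflection l R = M⁻¹) :
    A * (J l R * brakeReflection l R) = J l R * brakeReflection l R * M := by
  have hM : IsUnit M.det := isUnit_det_of_mul_mul_eq (isUnit_det_J l R) hJ
  calc A * (J l R * brakeReflection l R)
      = A * J l R * M * M⁻¹ * brakeReflection l R := by
        rw [mul_nonsing_inv_cancel_right M _ hM, Matrix.mul_assoc]
    _ = J l R * brakeReflection l R * M * (brakeReflection l R * brakeReflection l R) := by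
        rw [hJ, ← hN]
        simp only [Matrix.mul_assoc]
    _ = J l R * brakeReflection l R * M := by rw [brakeReflection_mul_self, Matrix.mul_one]

theorem star_dotProduct_J_mulVec_sub [StarRing R] (x₁ y₁ x₂ y₂ : l → R) :
    star (Sum.elim x₂ y₂) ⬝ᵥ J l R *ᵥ Sum.elim x₁ y₁ -
        star (Sum.elim x₂ y₂) ⬝ᵥ (J l R * brakeReflection l R) *ᵥ Sum.elim x₁ y₁ =
      2 * (x₁ ⬝ᵥ star y₂) := by
  simp only [J, brakeReflection, fromBlocks_multiply, fromBlocks_mulVec, Function.star_sumElim,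
    sumElim_dotProduct_sumElim, Sum.elim_comp_inl, Sum.elim_comp_inr, Matrix.mul_zero,
    Matrix.mul_one, Matrix.mul_neg, neg_zero, zero_add, add_zero, zero_mulVec,
    one_mulVec, neg_mulVec, dotProduct_neg, dotProduct_comm x₁]
  ring

theorem conjTranspose_map_mul_J_mul_map [StarRing S] {f : R →+* S}
    (hf : ∀ r, star (f r) = f r) {M : Matrix (l ⊕ l) (l ⊕ l) R} (hJ : Mᵀ * J l R * M = J l R) :
    (M.map f)ᴴ * J l S * M.map f = J l S := by
  have hstar : (M.map f)ᴴ = Mᵀ.map f := Matrix.ext fun i j => hf (M j i)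
  rw [hstar, ← map_J l f, ← Matrix.map_mul, ← Matrix.map_mul, hJ]

theorem brakeReflection_mul_map_mul (f : R →+* S) {M : Matrix (l ⊕ l) (l ⊕ l) R}
    (hM : IsUnit M.det) (hN : brakeReflection l R * M * brakeReflection l R = M⁻¹) :
    brakeReflection l S * M.map f * brakeReflection l S = (M.map f)⁻¹ := by
  rw [← map_brakeReflection f, ← Matrix.map_mul, ← Matrix.map_mul, hN, map_nonsing_inv f hM]

end Brake

theorem brake_eigvec_trichotomy_general {l K : Type*} [Fintype l] [DecidableEq l] [CommRing K]
    [NoZeroDivisors K] [NeZero (2 : K)] [StarRing K] {M : Matrix (l ⊕ l) (l ⊕ l) K}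
    (hJ : Mᴴ * J l K * M = J l K)
    (hN : brakeReflection l K * M * brakeReflection l K = M⁻¹)
    {μ₁ μ₂ : K} {x₁ y₁ x₂ y₂ : l → K}
    (h₁ : M *ᵥ Sum.elim x₁ y₁ = μ₁ • Sum.elim x₁ y₁)
    (h₂ : M *ᵥ Sum.elim x₂ y₂ = μ₂ • Sum.elim x₂ y₂) :
    μ₁ = star μ₂ ∨ μ₁ * star μ₂ = 1 ∨ x₁ ⬝ᵥ star y₂ = 0 := by
  obtain hμ | hJN := eq_star_or_star_dotProduct_mulVec_eq_zero
    (mul_J_mul_brakeReflection hJ hN) h₁ h₂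
  · exact Or.inl hμ
  obtain hμ | hJ₀ := mul_star_eq_one_or_star_dotProduct_mulVec_eq_zero hJ h₁ h₂
  · exact Or.inr (Or.inl hμ)
  have htwo : 2 * (x₁ ⬝ᵥ star y₂) = 0 := by
    rw [← star_dotProduct_J_mulVec_sub x₁ y₁, hJ₀, hJN, sub_zero]
  exact Or.inr (Or.inr ((mul_eq_zero.mp htwo).resolve_left two_ne_zero))

/-- For a brake-symmetric symplectic matrix (`N M N = M⁻¹`) with eigenvalues
`λ₁, λ₂` and eigenvectors `(x₁,y₁), (x₂,y₂)`, at least one of the following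
holds: `λ₁ = conj(λ₂)`, `λ₁·conj(λ₂) = 1`, or `⟨x₁, y₂⟩ = 0`. -/
theorem brake_eigvec_trichotomy (n : ℕ)
    (M : Matrix (Fin n ⊕ Fin n) (Fin n ⊕ Fin n) ℝ)
    (hM : Mᵀ * Matrix.J (Fin n) ℝ * M = Matrix.J (Fin n) ℝ)
    (hbrake : fromBlocks (-1 : Matrix (Fin n) (Fin n) ℝ) 0 0 1 * M
        * fromBlocks (-1) 0 0 1 = M⁻¹)
    (lam₁ lam₂ : ℂ) (x₁ y₁ x₂ y₂ : Fin n → ℂ)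
    (hne₁ : Sum.elim x₁ y₁ ≠ 0) (hne₂ : Sum.elim x₂ y₂ ≠ 0)
    (h₁ : (M.map Complex.ofReal).mulVec (Sum.elim x₁ y₁) = lam₁ • Sum.elim x₁ y₁)
    (h₂ : (M.map Complex.ofReal).mulVec (Sum.elim x₂ y₂) = lam₂ • Sum.elim x₂ y₂) :
    lam₁ = (starRingEnd ℂ) lam₂ ∨ lam₁ * (starRingEnd ℂ) lam₂ = 1
      ∨ ∑ i, x₁ i * (starRingEnd ℂ) (y₂ i) = 0 := by
  have hdet : IsUnit M.det := isUnit_det_of_mul_mul_eq (isUnit_det_J (Fin n) ℝ) hM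
  exact brake_eigvec_trichotomy_general
    (conjTranspose_map_mul_J_mul_map (f := Complex.ofRealHom) Complex.conj_ofReal hM)
    (brakeReflection_mul_map_mul Complex.ofRealHom hdet hbrake) h₁ h₂
end

section
/- Let M ∈ Sp(2n) with n×n blocks M = [[D₁,D₂],[D₃,D₄]], and let λ₁, λ₂ be eigenvalues of M (acting on ℂ^{2n} by complexification) with eigenvectors u₁ = (x₁,y₁), u₂ = (x₂,y₂) ∈ ℂ^n⊕ℂ^n. Let z_i ∈ Gr(M) be the elements corresponding to u_i. Then the Hermitian form 𝔔 = 𝔔(Gr(M), Λ_N; Λ_D), which in these coordinates is given by 𝔔(z,z′) = ⟨x, y′⟩ − ⟨D₁x + D₂y, D₃x′ + D₄y′⟩ for z, z′ corresponding to (x,y), (x′,y′), satisfies 𝔔(z₁, z₂) = (1 − λ₁·conj(λ₂))·⟨x₁, y₂⟩. -/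
open Matrix Module Submodule

noncomputable section

/-- Projection of `ℂ^{2n}` onto its `Λ^n_N` component (along `Λ^n_D`). -/
def projN (n : ℕ) (a : CV n) : CV n := Sum.elim 0 fun j => a (Sum.inr j)

/-- Projection of `ℂ^{2n}` onto its `Λ^n_D` component (along `Λ^n_N`). -/
def projD (n : ℕ) (a : CV n) : CV n := Sum.elim (fun j => a (Sum.inl j)) 0

/-- The Hermitian form `𝔔(Gr(M), Λ_N; Λ_D)` on `ℂ^{4n}`:
`𝔔(z₁,z₂) = (−ω⊕ω)(w₁, v₂)` where `z_j = w_j + v_j`, `w_j ∈ Λ_N`, `v_j ∈ Λ_D`. -/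
def QGr (n : ℕ) (z w : CV n × CV n) : ℂ :=
  symForm2 n (projN n z.1, projN n z.2) (projD n w.1, projD n w.2)

/-!
Write `a = (a_D, a_N)` for the two blocks of `a : ℂ^{2n}`. Since
`ω(a, b) = ⟨a_D, b_N⟩ - ⟨a_N, b_D⟩`, the form `𝔔` keeps only the `⟨a_N, b_D⟩` half of `-ω ⊕ ω`.
The form `-ω ⊕ ω` vanishes on the graph of a symplectic matrix, so there this half may be traded
for the `⟨a_D, b_N⟩` half, which is the coordinate formula. On eigenvectors the images under `M`
contribute `λ₁ * conj λ₂` times what the vectors themselves do, by sesquilinearity.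
-/

section Herm

variable {m k : Type*} [Fintype m] [Fintype k]

theorem herm_eq_dotProduct_star (x y : m → ℂ) : herm x y = x ⬝ᵥ star y := rfl

theorem herm_zero_left (y : m → ℂ) : herm 0 y = 0 := by
  simp [herm]

theorem herm_neg_left (x y : m → ℂ) : herm (-x) y = -herm x y := by
  simp [herm]

theorem herm_smul_smul (c d : ℂ) (x y : m → ℂ) :
    herm (c • x) (d • y) = c * (starRingEnd ℂ) d * herm x y := by
  simp only [herm_eq_dotProduct_star, star_smul, smul_dotProduct, dotProduct_smul, smul_eq_mul,
    starRingEnd_apply]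
  ring

theorem herm_sumElim (x x' : m → ℂ) (y y' : k → ℂ) :
    herm (Sum.elim x y) (Sum.elim x' y') = herm x x' + herm y y' := by
  simp [herm]

theorem herm_mulVec_right (A : Matrix m k ℂ) (x : m → ℂ) (y : k → ℂ) :
    herm x (A *ᵥ y) = herm (Aᴴ *ᵥ x) y := by
  rw [herm_eq_dotProduct_star, herm_eq_dotProduct_star, star_mulVec, dotProduct_comm,
    ← dotProduct_mulVec, dotProduct_comm]

end Herm

section BlockMatrix

variable {l R : Type*} [Fintype l]

theorem mulVec_sumElim_eq_toBlocks {l' m m' : Type*} [Fintype l'] [NonUnitalNonAssocSemiring R]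
    (M : Matrix (m ⊕ m') (l ⊕ l') R) (x : l → R) (y : l' → R) :
    M *ᵥ Sum.elim x y = Sum.elim (M.toBlocks₁₁ *ᵥ x + M.toBlocks₁₂ *ᵥ y)
      (M.toBlocks₂₁ *ᵥ x + M.toBlocks₂₂ *ᵥ y) := by
  conv_lhs => rw [← fromBlocks_toBlocks M]
  rw [fromBlocks_mulVec, Sum.elim_comp_inl, Sum.elim_comp_inr]

theorem J_mulVec_sumElim [DecidableEq l] [CommRing R] (x y : l → R) :
    J l R *ᵥ Sum.elim x y = Sum.elim (-y) x := by
  simp [J, fromBlocks_mulVec, neg_mulVec]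

theorem conjTranspose_mul_J_mul_map_ofReal [DecidableEq l] {M : Matrix (l ⊕ l) (l ⊕ l) ℝ}
    (hM : Mᵀ * J l ℝ * M = J l ℝ) :
    (M.map Complex.ofReal)ᴴ * J l ℂ * M.map Complex.ofReal = J l ℂ := by
  have hstar : (M.map Complex.ofReal)ᴴ = Mᵀ.map Complex.ofReal := by
    ext i j
    exact Complex.conj_ofReal (M j i)
  have hmap := congrArg (fun A ↦ A.map Complex.ofRealHom) hM
  simp only [Matrix.map_mul, map_J] at hmap
  rw [hstar]
  exact hmap

end BlockMatrix

section SymplecticForm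

variable {n : ℕ}

theorem symForm_sumElim (x y x' y' : Fin n → ℂ) :
    symForm n (Sum.elim x y) (Sum.elim x' y') = herm x y' - herm y x' := by
  rw [symForm, J_mulVec_sumElim, herm_sumElim, herm_neg_left]
  ring

theorem symForm_mulVec_mulVec {M : Matrix (Fin n ⊕ Fin n) (Fin n ⊕ Fin n) ℂ}
    (hM : Mᴴ * J (Fin n) ℂ * M = J (Fin n) ℂ) (a b : CV n) :
    symForm n (M *ᵥ a) (M *ᵥ b) = symForm n a b := by
  rw [symForm, herm_mulVec_right, mulVec_mulVec, mulVec_mulVec, hM, symForm]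

theorem symForm2_graph_eq_zero {M : Matrix (Fin n ⊕ Fin n) (Fin n ⊕ Fin n) ℂ}
    (hM : Mᴴ * J (Fin n) ℂ * M = J (Fin n) ℂ) (a b : CV n) :
    symForm2 n (a, M *ᵥ a) (b, M *ᵥ b) = 0 := by
  rw [symForm2, symForm_mulVec_mulVec hM, neg_add_cancel]

theorem symForm_projN_projD_sumElim (x y x' y' : Fin n → ℂ) :
    symForm n (projN n (Sum.elim x y)) (projD n (Sum.elim x' y')) = -herm y x' := by
  simp only [projN, projD, Sum.elim_inl, Sum.elim_inr, symForm_sumElim, herm_zero_left, zero_sub]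

theorem QGr_sumElim_eq_symForm2_add (x y u v x' y' u' v' : Fin n → ℂ) :
    QGr n (Sum.elim x y, Sum.elim u v) (Sum.elim x' y', Sum.elim u' v')
      = symForm2 n (Sum.elim x y, Sum.elim u v) (Sum.elim x' y', Sum.elim u' v')
        + (herm x y' - herm u v') := by
  simp only [QGr, symForm2, symForm_projN_projD_sumElim, symForm_sumElim]
  ring

theorem QGr_graph_of_mulVec_eq {M : Matrix (Fin n ⊕ Fin n) (Fin n ⊕ Fin n) ℂ}
    (hM : Mᴴ * J (Fin n) ℂ * M = J (Fin n) ℂ) {x y u v x' y' u' v' : Fin n → ℂ}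
    (h : M *ᵥ Sum.elim x y = Sum.elim u v) (h' : M *ᵥ Sum.elim x' y' = Sum.elim u' v') :
    QGr n (Sum.elim x y, M *ᵥ Sum.elim x y) (Sum.elim x' y', M *ᵥ Sum.elim x' y')
      = herm x y' - herm u v' := by
  have hisotropic := symForm2_graph_eq_zero hM (Sum.elim x y) (Sum.elim x' y')
  rw [h, h'] at hisotropic ⊢
  rw [QGr_sumElim_eq_symForm2_add, hisotropic, zero_add]

end SymplecticForm

theorem QGr_eigvec_formula_general (n : ℕ) (M : Matrix (Fin n ⊕ Fin n) (Fin n ⊕ Fin n) ℂ)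
    (hM : Mᴴ * J (Fin n) ℂ * M = J (Fin n) ℂ)
    (lam₁ lam₂ : ℂ) (x₁ y₁ x₂ y₂ : Fin n → ℂ)
    (h₁ : M *ᵥ Sum.elim x₁ y₁ = lam₁ • Sum.elim x₁ y₁)
    (h₂ : M *ᵥ Sum.elim x₂ y₂ = lam₂ • Sum.elim x₂ y₂) :
    (∀ x y x' y' : Fin n → ℂ,
      QGr n (Sum.elim x y, M *ᵥ Sum.elim x y) (Sum.elim x' y', M *ᵥ Sum.elim x' y')
        = herm x y'
          - herm (M.toBlocks₁₁ *ᵥ x + M.toBlocks₁₂ *ᵥ y)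
              (M.toBlocks₂₁ *ᵥ x' + M.toBlocks₂₂ *ᵥ y'))
    ∧ QGr n (Sum.elim x₁ y₁, M *ᵥ Sum.elim x₁ y₁) (Sum.elim x₂ y₂, M *ᵥ Sum.elim x₂ y₂)
        = (1 - lam₁ * (starRingEnd ℂ) lam₂) * herm x₁ y₂ := by
  refine ⟨fun x y x' y' ↦ QGr_graph_of_mulVec_eq hM (mulVec_sumElim_eq_toBlocks M x y)
    (mulVec_sumElim_eq_toBlocks M x' y'), ?_⟩
  have smul_sumElim (c : ℂ) (x y : Fin n → ℂ) : c • Sum.elim x y = Sum.elim (c • x) (c • y) :=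
    Sum.comp_elim (c • ·) x y
  rw [smul_sumElim] at h₁ h₂
  rw [QGr_graph_of_mulVec_eq hM h₁ h₂, herm_smul_smul, sub_mul, one_mul]

/-- The coordinate formula for `𝔔(Gr(M), Λ_N; Λ_D)` on the graph of a symplectic
matrix `M`, and its evaluation `𝔔(z₁,z₂) = (1 − λ₁·conj(λ₂))·⟨x₁,y₂⟩` on
eigenvectors. -/
theorem QGr_eigvec_formula (n : ℕ)
    (M : Matrix (Fin n ⊕ Fin n) (Fin n ⊕ Fin n) ℝ)
    (hM : Mᵀ * Matrix.J (Fin n) ℝ * M = Matrix.J (Fin n) ℝ)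
    (lam₁ lam₂ : ℂ) (x₁ y₁ x₂ y₂ : Fin n → ℂ)
    (hne₁ : Sum.elim x₁ y₁ ≠ 0) (hne₂ : Sum.elim x₂ y₂ ≠ 0)
    (h₁ : (M.map Complex.ofReal).mulVec (Sum.elim x₁ y₁) = lam₁ • Sum.elim x₁ y₁)
    (h₂ : (M.map Complex.ofReal).mulVec (Sum.elim x₂ y₂) = lam₂ • Sum.elim x₂ y₂) :
    (∀ x y x' y' : Fin n → ℂ,
      QGr n (Sum.elim x y, (M.map Complex.ofReal).mulVec (Sum.elim x y))
            (Sum.elim x' y', (M.map Complex.ofReal).mulVec (Sum.elim x' y'))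
        = herm x y'
          - herm ((M.toBlocks₁₁.map Complex.ofReal).mulVec x
                    + (M.toBlocks₁₂.map Complex.ofReal).mulVec y)
                 ((M.toBlocks₂₁.map Complex.ofReal).mulVec x'
                    + (M.toBlocks₂₂.map Complex.ofReal).mulVec y'))
    ∧ QGr n (Sum.elim x₁ y₁, (M.map Complex.ofReal).mulVec (Sum.elim x₁ y₁))
            (Sum.elim x₂ y₂, (M.map Complex.ofReal).mulVec (Sum.elim x₂ y₂))
        = (1 - lam₁ * (starRingEnd ℂ) lam₂) * herm x₁ y₂ :=
  QGr_eigvec_formula_general n _ (conjTranspose_mul_J_mul_map_ofReal hM) lam₁ lam₂ x₁ y₁ x₂ y₂ h₁ h₂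
end
end

section
/- Let M ∈ Sp(2n) satisfy the brake symmetry N M N = M⁻¹, acting on ℂ^{2n} by complexification. Set m⁺ = m⁺(𝔔(Gr(M), Λ_N; Λ_D)), d_N = dim(Gr(M) ∩ Λ_N), d_D = dim(Gr(M) ∩ Λ_D). Then: (i) the sum of dim_ℂ ker(M − λI_{2n}) over all eigenvalues λ of M with Im(λ) > 0, together with λ ∈ {1, −1}, is at most m⁺ + d_N + d_D; (ii) the sum of dim_ℂ ker(M − λI_{2n}) over all eigenvalues λ of M with Im(λ) > 0 is at most m⁺ + d_D. -/
open Matrix Module Submodule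

noncomputable section

/-!
Since `N` is anti-symplectic and `N M N = M⁻¹`, the Hermitian form `h(x, y) = ω(N y, x)` is
nondegenerate and `M` is `h`-selfadjoint. Under the identification of `Gr(M)` with the domain of
`M`, the form `𝔔` becomes half of the form `B(x, y) = h(M x, M y) - h(x, y) = h(x, (M² - 1) y)`.

Let `S` be a set of eigenvalues disjoint from its complex conjugate, so that `±1 ∉ S`. The sum `W`
of the corresponding eigenspaces is `M`-invariant and `h`-isotropic, hence `B`-isotropic, and
`M² - 1` is injective on it. Thus no nonzero vector of `W` is `B`-orthogonal to the whole space, and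
this forces a `B`-positive subspace of dimension `dim W`.

The eigenvalues `±1` only see `ker (M² - 1)`, on which `N` and `M` commute. Hence `x ↦ (x, M x)`
embeds the `1`- and `-1`-eigenspaces of `N` on it into `Gr(M) ∩ Λ_N` and `Gr(M) ∩ Λ_D`.
-/

section LinearAlgebra

variable {K V : Type*} [Field K] [AddCommGroup V] [Module K V]

lemma finrank_le_finrank_inf_ker_add_one [FiniteDimensional K V] (W : Submodule K V)
    (f : V →ₗ[K] K) : finrank K W ≤ finrank K ↥(W ⊓ LinearMap.ker f) + 1 := by
  have hsup := finrank_sup_add_finrank_inf_eq W (LinearMap.ker f)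
  have hker := f.finrank_range_add_finrank_ker
  have hrange := (finrank_le (LinearMap.range f)).trans_eq (finrank_self K)
  have hle := finrank_le (W ⊔ LinearMap.ker f)
  lia

lemma finrank_biSup_eq_sum_of_iSupIndep [FiniteDimensional K V] {ι : Type*}
    {p : ι → Submodule K V} (hp : iSupIndep p) (s : Finset ι) :
    finrank K ↥(⨆ i ∈ s, p i) = ∑ i ∈ s, finrank K (p i) := by
  classical
  induction s using Finset.induction_on with
  | empty => simp
  | insert a s ha ih =>
    have hdisj : Disjoint (p a) (⨆ i ∈ s, p i) :=
      hp.disjoint_biSup (y := (s : Set ι)) (by simpa using ha)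
    rw [Finset.iSup_insert, Finset.sum_insert ha, ← ih, ← finrank_sup_add_finrank_inf_eq,
      hdisj.eq_bot, finrank_bot, add_zero]

lemma le_inf_eigenspace_one_sup_inf_eigenspace_neg_one [NeZero (2 : K)] {f : End K V}
    {p : Submodule K V} (hp : ∀ x ∈ p, f x ∈ p) (hf : ∀ x ∈ p, f (f x) = x) :
    p ≤ p ⊓ f.eigenspace 1 ⊔ p ⊓ f.eigenspace (-1) := by
  intro x hx
  refine mem_sup.2 ⟨(2⁻¹ : K) • (x + f x), ⟨p.smul_mem _ (p.add_mem hx (hp x hx)), ?_⟩,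
    (2⁻¹ : K) • (x - f x), ⟨p.smul_mem _ (p.sub_mem hx (hp x hx)), ?_⟩, ?_⟩
  · simp [hf x hx, add_comm]
  · simp [hf x hx, ← smul_neg]
  · rw [← smul_add, add_add_sub_cancel, ← two_smul K x, inv_smul_smul₀ two_ne_zero]

lemma eq_zero_of_mem_biSup_eigenspace_of_apply_apply_eq [NeZero (2 : K)] {f : End K V} {S : Set K}
    (h₁ : 1 ∉ S) (h₂ : -1 ∉ S) {x : V} (hx : x ∈ ⨆ l ∈ S, f.eigenspace l) (hfx : f (f x) = x) :
    x = 0 := by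
  have hsup : x ∈ ⨆ l ∈ ({1, -1} : Set K), f.eigenspace l := by
    have hle : LinearMap.eqLocus (f ∘ₗ f) LinearMap.id ≤ f.eigenspace 1 ⊔ f.eigenspace (-1) :=
      (le_inf_eigenspace_one_sup_inf_eigenspace_neg_one (fun y hy => congrArg f hy)
        fun y hy => hy).trans (sup_le_sup inf_le_right inf_le_right)
    rw [iSup_pair]
    exact hle hfx
  have hdisj : Disjoint ({1, -1} : Set K) S := by simp [h₁, h₂]
  exact disjoint_def.1 (f.eigenspaces_iSupIndep.disjoint_biSup_biSup hdisj) x hsup hx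

lemma apply_mem_biSup_eigenspace (f : End K V) (S : Set K) {x : V}
    (hx : x ∈ ⨆ l ∈ S, f.eigenspace l) : f x ∈ ⨆ l ∈ S, f.eigenspace l := by
  have hle : ⨆ l ∈ S, f.eigenspace l ≤ (⨆ l ∈ S, f.eigenspace l).comap f :=
    iSup₂_le fun l hl y hy => le_biSup f.eigenspace hl (f.eigenspace_mem_invtSubmodule l hy)
  exact hle hx

lemma finrank_ker_sub_smul_id (f : End K V) (l : K) :
    finrank K (LinearMap.ker (f - l • LinearMap.id)) = finrank K (f.eigenspace l) := by
  rw [End.eigenspace_def, End.one_eq_id]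

end LinearAlgebra

section SelfAdjoint

variable {K V : Type*} [Field K] [AddCommGroup V] [Module K V] {I : K →+* K}
  {B : V →ₛₗ[I] V →ₗ[K] K} {T : End K V}

lemma apply_eq_zero_of_mem_eigenspace (hT : ∀ x y, B (T x) y = B x (T y)) {l m : K}
    (hlm : I l ≠ m) {x y : V} (hx : x ∈ T.eigenspace l) (hy : y ∈ T.eigenspace m) :
    B x y = 0 := by
  have h := hT x y
  rw [End.mem_eigenspace_iff.1 hx, End.mem_eigenspace_iff.1 hy, LinearMap.map_smulₛₗ₂, map_smul,
    smul_eq_mul, smul_eq_mul, mul_eq_mul_right_iff] at h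
  exact h.resolve_left hlm

lemma apply_eq_zero_of_mem_biSup_eigenspace (hT : ∀ x y, B (T x) y = B x (T y)) {S : Set K}
    (hS : ∀ l ∈ S, I l ∉ S) {x y : V} (hx : x ∈ ⨆ l ∈ S, T.eigenspace l)
    (hy : y ∈ ⨆ l ∈ S, T.eigenspace l) : B x y = 0 := by
  have hright : ∀ l ∈ S, ∀ z ∈ T.eigenspace l, B z y = 0 := fun l hl z hz =>
    (iSup₂_le fun m hm t ht => LinearMap.mem_ker.2 <|
      apply_eq_zero_of_mem_eigenspace hT (ne_of_mem_of_not_mem hm (hS l hl)).symm hz ht :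
        _ ≤ LinearMap.ker (B z)) hy
  exact (iSup₂_le fun l hl z hz => LinearMap.mem_ker.2 (hright l hl z hz) :
    _ ≤ LinearMap.ker (B.flip y)) hx

end SelfAdjoint

section PositiveSubspaces

variable {𝕜 V : Type*} [RCLike 𝕜] [AddCommGroup V] [Module 𝕜 V] {B : V →ₗ⋆[𝕜] V →ₗ[𝕜] 𝕜}

/-- The sesquilinear form `B` is positive definite on the subspace `P`. For the Hermitian forms
considered below `B x x` is real; taking real parts avoids carrying that fact around. -/
def IsPosDefOn (B : V →ₗ⋆[𝕜] V →ₗ[𝕜] 𝕜) (P : Submodule 𝕜 V) : Prop :=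
  ∀ x ∈ P, x ≠ 0 → 0 < RCLike.re (B x x)

lemma re_apply_add_smul_self (hB : B.IsSymm) (v w : V) (c : 𝕜) :
    RCLike.re (B (v + c • w) (v + c • w)) =
      RCLike.re (B v v) + 2 * RCLike.re (c * B v w) + ‖c‖ ^ 2 * RCLike.re (B w w) := by
  have hswap : RCLike.re (starRingEnd 𝕜 c * B w v) = RCLike.re (c * B v w) := by
    rw [← hB.eq v w, ← map_mul, RCLike.conj_re]
  have hsq : RCLike.re (c * (starRingEnd 𝕜 c * B w w)) = ‖c‖ ^ 2 * RCLike.re (B w w) := by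
    rw [← mul_assoc, RCLike.mul_conj, ← RCLike.ofReal_pow, RCLike.re_ofReal_mul]
  simp only [map_add, LinearMap.add_apply, map_smulₛₗ, LinearMap.smul_apply, smul_eq_mul,
    RingHom.id_apply, mul_add, hswap, hsq]
  ring

lemma exists_re_apply_add_smul_self_pos (hB : B.IsSymm) {v w : V} (hvw : B v w ≠ 0)
    (hw : 0 ≤ RCLike.re (B w w)) :
    ∃ c : 𝕜, 0 < RCLike.re (B (v + c • w) (v + c • w)) := by
  refine ⟨((|RCLike.re (B v v)| + 1 : ℝ) : 𝕜) / B v w, ?_⟩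
  rw [re_apply_add_smul_self hB, div_mul_cancel₀ _ hvw, RCLike.ofReal_re]
  have := neg_abs_le (RCLike.re (B v v))
  have := abs_nonneg (RCLike.re (B v v))
  nlinarith [mul_nonneg (sq_nonneg ‖((|RCLike.re (B v v)| + 1 : ℝ) : 𝕜) / B v w‖) hw]

lemma IsPosDefOn.sup_span_singleton (hB : B.IsSymm) {P : Submodule 𝕜 V} (hP : IsPosDefOn B P)
    {u : V} (hu : 0 < RCLike.re (B u u)) (hPu : ∀ p ∈ P, B p u = 0) :
    IsPosDefOn B (P ⊔ 𝕜 ∙ u) := by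
  intro x hx hx0
  obtain ⟨p, hp, q, hq, rfl⟩ := mem_sup.1 hx
  obtain ⟨a, rfl⟩ := mem_span_singleton.1 hq
  rw [re_apply_add_smul_self hB, hPu p hp, mul_zero, map_zero, mul_zero, add_zero]
  by_cases hp0 : p = 0
  · have ha : a ≠ 0 := by
      rintro rfl
      simp [hp0] at hx0
    subst hp0
    rw [map_zero, map_zero, zero_add]
    positivity
  · exact add_pos_of_pos_of_nonneg (hP p hp hp0) (by positivity)

lemma forall_apply_eq_zero_of_inf_ker {U : Submodule 𝕜 V} {u w : V} (hu : u ∈ U)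
    (huu : B u u ≠ 0) (huw : B u w = 0) (hw : ∀ x ∈ U ⊓ LinearMap.ker (B u), B x w = 0) :
    ∀ x ∈ U, B x w = 0 := by
  intro x hx
  set a : 𝕜 := B u x / B u u
  have hproj : x - a • u ∈ U ⊓ LinearMap.ker (B u) :=
    ⟨U.sub_mem hx (U.smul_mem a hu), by simp [a, huu]⟩
  simpa [huw] using hw _ hproj

/-- If `B v w ≠ 0` then `u = v + c • w` is positive for some `c`; splitting `u` off and passing to
its orthogonal complement costs at most one dimension of `W`. -/
lemma exists_isPosDefOn_finrank_eq [FiniteDimensional 𝕜 V] (hB : B.IsSymm) {U W : Submodule 𝕜 V}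
    (hWU : W ≤ U) (hW : ∀ w ∈ W, 0 ≤ RCLike.re (B w w))
    (hrad : ∀ w ∈ W, (∀ u ∈ U, B u w = 0) → w = 0) {k : ℕ} (hk : k ≤ finrank 𝕜 W) :
    ∃ P ≤ U, IsPosDefOn B P ∧ finrank 𝕜 P = k := by
  induction k generalizing U W with
  | zero => exact ⟨⊥, bot_le, by simp [IsPosDefOn], finrank_bot 𝕜 V⟩
  | succ k ih =>
    obtain ⟨w, hw, hw0⟩ := W.exists_mem_ne_zero_of_ne_bot (by rintro rfl; simp at hk)
    obtain ⟨v, hv, hvw⟩ : ∃ v ∈ U, B v w ≠ 0 := by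
      by_contra! h
      exact hw0 (hrad w hw h)
    obtain ⟨c, hu⟩ := exists_re_apply_add_smul_self_pos hB hvw (hW w hw)
    set u := v + c • w
    have huU : u ∈ U := U.add_mem hv (U.smul_mem c (hWU hw))
    have huu : B u u ≠ 0 := fun h => by simp [h] at hu
    obtain ⟨P, hPU, hP, hPk⟩ := ih (inf_le_inf_right (LinearMap.ker (B u)) hWU)
      (fun x hx => hW x hx.1)
      (fun x hx h => hrad x hx.1 (forall_apply_eq_zero_of_inf_ker huU huu hx.2 h))
      (by have := finrank_le_finrank_inf_ker_add_one W (B u); lia)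
    refine ⟨P ⊔ 𝕜 ∙ u, sup_le (hPU.trans inf_le_left) ((span_singleton_le_iff_mem u U).2 huU),
      hP.sup_span_singleton hB hu fun p hp => hB.isRefl _ _ (hPU hp).2, ?_⟩
    rw [finrank_sup_span_singleton fun h => huu (hPU h).2, hPk]

end PositiveSubspaces

section InvarianceDefect

variable {𝕜 V : Type*} [RCLike 𝕜] [AddCommGroup V] [Module 𝕜 V] {B : V →ₗ⋆[𝕜] V →ₗ[𝕜] 𝕜}
  {T : End 𝕜 V}

/-- The form `(x, y) ↦ B (T x) (T y) - B x y`, measuring how far `T` is from preserving `B`. -/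
def invarianceDefect (B : V →ₗ⋆[𝕜] V →ₗ[𝕜] 𝕜) (T : End 𝕜 V) : V →ₗ⋆[𝕜] V →ₗ[𝕜] 𝕜 :=
  (B.comp T).compl₂ T - B

lemma invarianceDefect_apply (x y : V) :
    invarianceDefect B T x y = B (T x) (T y) - B x y := rfl

lemma invarianceDefect_isSymm (hB : B.IsSymm) : (invarianceDefect B T).IsSymm where
  eq x y := by simp only [invarianceDefect_apply, map_sub, hB.eq]

lemma exists_isPosDefOn_invarianceDefect [FiniteDimensional 𝕜 V] (hB : B.IsSymm)
    (hsep : B.SeparatingRight) (hT : ∀ x y, B (T x) y = B x (T y)) {S : Set 𝕜}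
    (hS : ∀ l ∈ S, starRingEnd 𝕜 l ∉ S) :
    ∃ P : Submodule 𝕜 V, IsPosDefOn (invarianceDefect B T) P ∧
      finrank 𝕜 P = finrank 𝕜 ↥(⨆ l ∈ S, T.eigenspace l) := by
  have hiso : ∀ w ∈ ⨆ l ∈ S, T.eigenspace l, invarianceDefect B T w w = 0 := fun w hw => by
    have hTw := apply_mem_biSup_eigenspace T S hw
    rw [invarianceDefect_apply, apply_eq_zero_of_mem_biSup_eigenspace hT hS hTw hTw,
      apply_eq_zero_of_mem_biSup_eigenspace hT hS hw hw, sub_zero]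
  have hrad : ∀ w, (∀ u, invarianceDefect B T u w = 0) → T (T w) = w := fun w hw =>
    sub_eq_zero.1 <| hsep _ fun u => by
      rw [map_sub, ← hT, ← invarianceDefect_apply, hw]
  have h₁ : (1 : 𝕜) ∉ S := fun h => hS 1 h (by rwa [map_one])
  have h₂ : (-1 : 𝕜) ∉ S := fun h => hS (-1) h (by rwa [map_neg, map_one])
  obtain ⟨P, -, hP, hPfinrank⟩ := exists_isPosDefOn_finrank_eq (invarianceDefect_isSymm hB)
    (W := ⨆ l ∈ S, T.eigenspace l) le_top (fun w hw => by simp [hiso w hw])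
    (fun w hw h => eq_zero_of_mem_biSup_eigenspace_of_apply_apply_eq h₁ h₂ hw
      (hrad w fun u => h u mem_top)) le_rfl
  exact ⟨P, hP, hPfinrank⟩

end InvarianceDefect

section FixedPoints

lemma mul_mul_eq_of_brake {R : Type*} [Monoid R] {N M : R} (hN : N * N = 1)
    (hbrake : N * M * N * M = 1) : M * N * M = N :=
  calc M * N * M = N * N * (M * N * M) := by rw [hN, one_mul]
    _ = N * (N * M * N * M) := by simp only [mul_assoc]
    _ = N := by rw [hbrake, mul_one]

variable {K V : Type*} [Field K] [AddCommGroup V] [Module K V] {N M : End K V}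

lemma apply_apply_comm_of_mul_mul_eq (hMNM : M * N * M = N) {x : V} (hx : M (M x) = x) :
    N (M x) = M (N x) :=
  calc N (M x) = M (N (M (M x))) := (LinearMap.congr_fun hMNM (M x)).symm
    _ = M (N x) := by rw [hx]

lemma map_id_prod_le_graph_inf_prod (hMNM : M * N * M = N) {ε : K} :
    ((M * M).eigenspace 1 ⊓ N.eigenspace ε).map (LinearMap.id.prod M) ≤
      M.graph ⊓ (N.eigenspace ε).prod (N.eigenspace ε) := by
  rintro _ ⟨x, ⟨hMMx, hNx⟩, rfl⟩
  have hMM : M (M x) = x := by simpa using hMMx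
  refine ⟨rfl, hNx, End.mem_eigenspace_iff.2 ?_⟩
  change N (M x) = ε • M x
  rw [apply_apply_comm_of_mul_mul_eq hMNM hMM, End.mem_eigenspace_iff.1 hNx, map_smul]

lemma finrank_eigenspace_mul_self_one_le [NeZero (2 : K)] [FiniteDimensional K V]
    (hN : N * N = 1) (hMNM : M * N * M = N) :
    finrank K ((M * M).eigenspace 1) ≤
      finrank K ↥(M.graph ⊓ (N.eigenspace 1).prod (N.eigenspace 1)) +
      finrank K ↥(M.graph ⊓ (N.eigenspace (-1)).prod (N.eigenspace (-1))) := by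
  have hg : Function.Injective (LinearMap.id.prod M : V →ₗ[K] V × V) :=
    fun x y h => congrArg Prod.fst h
  have hle (ε : K) : finrank K ↥((M * M).eigenspace 1 ⊓ N.eigenspace ε) ≤
      finrank K ↥(M.graph ⊓ (N.eigenspace ε).prod (N.eigenspace ε)) :=
    (equivMapOfInjective _ hg _).finrank_eq.trans_le
      (finrank_mono (map_id_prod_le_graph_inf_prod hMNM))
  have hinv : ∀ x ∈ (M * M).eigenspace 1, N x ∈ (M * M).eigenspace 1 := fun x hx => by
    have hMM : M (M x) = x := by simpa using hx
    have hMMN : M (M (N x)) = N x := by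
      rw [← apply_apply_comm_of_mul_mul_eq hMNM hMM]
      exact LinearMap.congr_fun hMNM x
    simpa using hMMN
  calc finrank K ((M * M).eigenspace 1) ≤ finrank K
        ↥((M * M).eigenspace 1 ⊓ N.eigenspace 1 ⊔ (M * M).eigenspace 1 ⊓ N.eigenspace (-1)) :=
        finrank_mono (le_inf_eigenspace_one_sup_inf_eigenspace_neg_one hinv
          fun x _ => LinearMap.congr_fun hN x)
    _ ≤ _ := (finrank_add_le_finrank_add_finrank _ _).trans (add_le_add (hle 1) (hle (-1)))

lemma sum_finrank_eigenspace_le_of_mul_self_eq_one [FiniteDimensional K V] {S : Finset K}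
    (hS : ∀ l ∈ S, l * l = 1) :
    ∑ l ∈ S, finrank K (M.eigenspace l) ≤ finrank K ((M * M).eigenspace 1) := by
  rw [← finrank_biSup_eq_sum_of_iSupIndep M.eigenspaces_iSupIndep]
  refine finrank_mono (iSup₂_le fun l hl x hx => End.mem_eigenspace_iff.2 ?_)
  have hMx : M x = l • x := End.mem_eigenspace_iff.1 hx
  rw [End.mul_apply, hMx, map_smul, hMx, smul_smul, hS l hl]

end FixedPoints

section BrakeSymmetry

variable {V : Type*} [AddCommGroup V] [Module ℂ V] {ω : V →ₗ[ℂ] V →ₗ⋆[ℂ] ℂ} {N M : End ℂ V}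

lemma finrank_le_posInd [FiniteDimensional ℂ V] {w : V → V → ℂ} {α β κ P : Submodule ℂ V}
    (hP : P ≤ α ⊓ (β ⊔ κ))
    (hpos : ∀ x ∈ P, x ≠ 0 → ∀ y ∈ β, ∀ z ∈ κ, x = y + z → 0 < (w y z).re) :
    finrank ℂ P ≤ posInd w α β κ := by
  refine le_csSup ⟨finrank ℂ V, ?_⟩ ⟨P, hP, hpos, rfl⟩
  rintro _ ⟨Q, -, -, rfl⟩
  exact Q.finrank_le

/-- The symplectic form `-ω ⊕ ω` on `V × V`, for which graphs of symplectic maps are Lagrangian. -/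
def graphForm (ω : V →ₗ[ℂ] V →ₗ⋆[ℂ] ℂ) (p q : V × V) : ℂ :=
  -ω p.1 q.1 + ω p.2 q.2

/-- The form `(x, y) ↦ ω (N y) x`, Hermitian when `N` is an anti-symplectic involution. The
arguments are swapped because `ω` is conjugate-linear in the second one. -/
def brakeForm (ω : V →ₗ[ℂ] V →ₗ⋆[ℂ] ℂ) (N : End ℂ V) : V →ₗ⋆[ℂ] V →ₗ[ℂ] ℂ :=
  ω.flip.compl₂ N

lemma brakeForm_apply (x y : V) : brakeForm ω N x y = ω (N y) x := rfl

lemma brakeForm_isSymm (hskew : ∀ x y, ω y x = -starRingEnd ℂ (ω x y)) (hN : N * N = 1)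
    (hωN : ∀ x y, ω (N x) (N y) = -ω x y) : (brakeForm ω N).IsSymm where
  eq x y := by
    have hNN : N (N y) = y := LinearMap.congr_fun hN y
    rw [brakeForm_apply, brakeForm_apply, ← neg_eq_iff_eq_neg.2 (hskew (N y) x), ← hωN, hNN]

lemma brakeForm_separatingRight (hω : ω.SeparatingLeft) (hN : N * N = 1) :
    (brakeForm ω N).SeparatingRight := fun y hy => by
  have hNN : N (N y) = y := LinearMap.congr_fun hN y
  rw [← hNN, hω (N y) hy, map_zero]

lemma brakeForm_apply_left (hN : N * N = 1) (hωM : ∀ x y, ω (M x) (M y) = ω x y)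
    (hbrake : N * M * N * M = 1) (x y : V) :
    brakeForm ω N (M x) y = brakeForm ω N x (M y) := by
  have hMNMy : M (N (M y)) = N y := LinearMap.congr_fun (mul_mul_eq_of_brake hN hbrake) y
  rw [brakeForm_apply, brakeForm_apply, ← hMNMy, hωM]

lemma re_brakeForm_add_self (hskew : ∀ x y, ω y x = -starRingEnd ℂ (ω x y))
    (hωN : ∀ x y, ω (N x) (N y) = -ω x y) {y z : V} (hy : y ∈ N.eigenspace 1)
    (hz : z ∈ N.eigenspace (-1)) :
    (brakeForm ω N (y + z) (y + z)).re = 2 * (ω y z).re := by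
  have hNy : N y = y := by simpa using hy
  have hNz : N z = -z := by simpa using hz
  have hyy : ω y y = 0 := self_eq_neg.1 (by simpa only [hNy] using hωN y y)
  have hzz : ω z z = 0 := self_eq_neg.1 (by simpa [hNz] using hωN z z)
  simp only [map_add, LinearMap.add_apply, brakeForm_apply, hNy, hNz, map_neg, hyy,
    LinearMap.neg_apply, hskew y z, neg_neg, zero_add, hzz, neg_zero, add_zero, Complex.add_re,
    Complex.conj_re]
  ring

lemma finrank_le_posInd_graph [FiniteDimensional ℂ V]
    (hskew : ∀ x y, ω y x = -starRingEnd ℂ (ω x y)) (hN : N * N = 1)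
    (hωN : ∀ x y, ω (N x) (N y) = -ω x y) {P : Submodule ℂ V}
    (hP : IsPosDefOn (invarianceDefect (brakeForm ω N) M) P) :
    finrank ℂ P ≤ posInd (graphForm ω) M.graph ((N.eigenspace 1).prod (N.eigenspace 1))
      ((N.eigenspace (-1)).prod (N.eigenspace (-1))) := by
  set g : V →ₗ[ℂ] V × V := LinearMap.id.prod M
  have hg : Function.Injective g := fun x y h => congrArg Prod.fst h
  have hsup : ∀ x, x ∈ N.eigenspace 1 ⊔ N.eigenspace (-1) := fun x =>
    (le_inf_eigenspace_one_sup_inf_eigenspace_neg_one (fun _ _ => mem_top)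
      (fun y _ => LinearMap.congr_fun hN y)).trans (sup_le_sup inf_le_right inf_le_right)
      (mem_top (x := x))
  rw [(equivMapOfInjective g hg P).finrank_eq]
  refine finrank_le_posInd ?_ ?_
  · rintro _ ⟨x, -, rfl⟩
    exact ⟨rfl, by rw [prod_sup_prod]; exact ⟨hsup x, hsup (M x)⟩⟩
  · rintro _ ⟨x, hx, rfl⟩ hx0 ⟨y, y'⟩ ⟨hy, hy'⟩ ⟨z, z'⟩ ⟨hz, hz'⟩ hdecomp
    have hxyz : x = y + z := congrArg Prod.fst hdecomp
    have hMxyz : M x = y' + z' := congrArg Prod.snd hdecomp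
    have hpos := hP x hx fun h => hx0 (by rw [h, map_zero])
    rw [invarianceDefect_apply, hMxyz, hxyz, map_sub, RCLike.re_eq_complex_re,
      re_brakeForm_add_self hskew hωN hy hz, re_brakeForm_add_self hskew hωN hy' hz'] at hpos
    simp only [graphForm, Complex.add_re, Complex.neg_re]
    linarith

lemma sum_finrank_eigenspace_le_posInd [FiniteDimensional ℂ V]
    (hskew : ∀ x y, ω y x = -starRingEnd ℂ (ω x y)) (hω : ω.SeparatingLeft) (hN : N * N = 1)
    (hωN : ∀ x y, ω (N x) (N y) = -ω x y) (hωM : ∀ x y, ω (M x) (M y) = ω x y)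
    (hbrake : N * M * N * M = 1) {S : Finset ℂ} (hS : ∀ l ∈ S, starRingEnd ℂ l ∉ S) :
    ∑ l ∈ S, finrank ℂ (M.eigenspace l) ≤
      posInd (graphForm ω) M.graph ((N.eigenspace 1).prod (N.eigenspace 1))
        ((N.eigenspace (-1)).prod (N.eigenspace (-1))) := by
  obtain ⟨P, hP, hPfinrank⟩ := exists_isPosDefOn_invarianceDefect
    (brakeForm_isSymm hskew hN hωN) (brakeForm_separatingRight hω hN)
    (brakeForm_apply_left hN hωM hbrake) (S := (S : Set ℂ)) (by simpa using hS)
  rw [← finrank_biSup_eq_sum_of_iSupIndep M.eigenspaces_iSupIndep]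
  exact hPfinrank.symm.trans_le (finrank_le_posInd_graph hskew hN hωN hP)

theorem brake_eigenvalue_dim_estimates_general [FiniteDimensional ℂ V]
    (hskew : ∀ x y, ω y x = -starRingEnd ℂ (ω x y)) (hω : ω.SeparatingLeft) (hN : N * N = 1)
    (hωN : ∀ x y, ω (N x) (N y) = -ω x y) (hωM : ∀ x y, ω (M x) (M y) = ω x y)
    (hbrake : N * M * N * M = 1) :
    (∀ S : Finset ℂ, (∀ l ∈ S, starRingEnd ℂ l ∉ S ∨ l = 1 ∨ l = -1) →
      ∑ l ∈ S, finrank ℂ (M.eigenspace l) ≤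
        posInd (graphForm ω) M.graph ((N.eigenspace 1).prod (N.eigenspace 1))
            ((N.eigenspace (-1)).prod (N.eigenspace (-1)))
          + finrank ℂ ↥(M.graph ⊓ (N.eigenspace 1).prod (N.eigenspace 1))
          + finrank ℂ ↥(M.graph ⊓ (N.eigenspace (-1)).prod (N.eigenspace (-1)))) ∧
    ∀ S : Finset ℂ, (∀ l ∈ S, starRingEnd ℂ l ∉ S) →
      ∑ l ∈ S, finrank ℂ (M.eigenspace l) ≤
        posInd (graphForm ω) M.graph ((N.eigenspace 1).prod (N.eigenspace 1))
          ((N.eigenspace (-1)).prod (N.eigenspace (-1))) := by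
  have hpos : ∀ S : Finset ℂ, (∀ l ∈ S, starRingEnd ℂ l ∉ S) → _ := fun S hS =>
    sum_finrank_eigenspace_le_posInd hskew hω hN hωN hωM hbrake hS
  refine ⟨fun S hS => ?_, hpos⟩
  rw [← Finset.sum_filter_add_sum_filter_not S (fun l => starRingEnd ℂ l ∉ S), add_assoc]
  refine add_le_add (hpos _ ?_) ?_
  · exact fun l hl h => (Finset.mem_filter.1 hl).2 (Finset.mem_filter.1 h).1
  · refine (sum_finrank_eigenspace_le_of_mul_self_eq_one fun l hl => ?_).trans
      (finrank_eigenspace_mul_self_one_le hN (mul_mul_eq_of_brake hN hbrake))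
    obtain ⟨hlS, hl'⟩ := Finset.mem_filter.1 hl
    obtain rfl | rfl := (hS l hlS).resolve_left hl' <;> norm_num

end BrakeSymmetry

section Matrices

open Complex (ofRealHom)

variable {m : Type*} [DecidableEq m]

lemma conjTranspose_J (R : Type*) [CommRing R] [StarRing R] : (J m R)ᴴ = -J m R := by
  simp [J, fromBlocks_conjTranspose, fromBlocks_neg]

/-- The matrix `N = diag(-I, I)` of the brake symmetry. -/
def brakeMatrix (m R : Type*) [DecidableEq m] [Ring R] : Matrix (m ⊕ m) (m ⊕ m) R :=
  fromBlocks (-1) 0 0 1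

lemma map_brakeMatrix {R S : Type*} [Ring R] [Ring S] (f : R →+* S) :
    (brakeMatrix m R).map f = brakeMatrix m S := by
  simp [brakeMatrix, fromBlocks_map, Matrix.map_neg]

lemma map_J {R S : Type*} [CommRing R] [CommRing S] (f : R →+* S) :
    (J m R).map f = J m S := by
  simp [J, fromBlocks_map, Matrix.map_neg]

variable [Fintype m]

lemma brakeMatrix_mul_self (R : Type*) [Ring R] : brakeMatrix m R * brakeMatrix m R = 1 := by
  simp [brakeMatrix, fromBlocks_multiply]

lemma conjTranspose_brakeMatrix_mul_J_mul (R : Type*) [CommRing R] [StarRing R] :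
    (brakeMatrix m R)ᴴ * J m R * brakeMatrix m R = -J m R := by
  simp [brakeMatrix, J, fromBlocks_conjTranspose, fromBlocks_multiply, fromBlocks_neg]

lemma conjTranspose_map_ofReal_mul_J_mul {M : Matrix (m ⊕ m) (m ⊕ m) ℝ}
    (hM : Mᵀ * J m ℝ * M = J m ℝ) :
    (M.map Complex.ofReal)ᴴ * J m ℂ * M.map Complex.ofReal = J m ℂ := by
  have hstar : (M.map Complex.ofReal)ᴴ = Mᵀ.map ofRealHom := by
    ext i j
    simp
  have h := congrArg (fun A => A.map ofRealHom) hM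
  rw [Matrix.map_mul, Matrix.map_mul, map_J, ← hstar] at h
  exact h

lemma brakeMatrix_mul_map_ofReal {M : Matrix (m ⊕ m) (m ⊕ m) ℝ}
    (hM : Mᵀ * J m ℝ * M = J m ℝ)
    (hbrake : brakeMatrix m ℝ * M * brakeMatrix m ℝ = M⁻¹) :
    brakeMatrix m ℂ * M.map Complex.ofReal * brakeMatrix m ℂ * M.map Complex.ofReal = 1 := by
  have hdet : IsUnit M.det := SymplecticGroup.symplectic_det (SymplecticGroup.mem_iff'.2 hM)
  have hreal : brakeMatrix m ℝ * M * brakeMatrix m ℝ * M = 1 := by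
    rw [hbrake, nonsing_inv_mul M hdet]
  have h := congrArg (fun A => A.map ofRealHom) hreal
  rw [Matrix.map_mul, Matrix.map_mul, Matrix.map_mul, map_brakeMatrix,
    Matrix.map_one _ (map_zero _) (map_one _)] at h
  exact h

end Matrices

section StandardSymplecticSpace

open scoped ComplexOrder

variable {n : ℕ}

lemma symForm_eq (x y : CV n) : symForm n x y = star y ⬝ᵥ J (Fin n) ℂ *ᵥ x :=
  dotProduct_comm _ _

/-- `symForm` bundled as a sesquilinear map. -/
def symFormₛₗ (n : ℕ) : CV n →ₗ[ℂ] CV n →ₗ⋆[ℂ] ℂ :=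
  LinearMap.mk₂'ₛₗ (RingHom.id ℂ) (starRingEnd ℂ) (symForm n)
    (by simp [symForm_eq, mulVec_add]) (by simp [symForm_eq, mulVec_smul])
    (by simp [symForm_eq]) (by simp [symForm_eq])

lemma symFormₛₗ_apply (x y : CV n) : symFormₛₗ n x y = star y ⬝ᵥ J (Fin n) ℂ *ᵥ x :=
  symForm_eq x y

lemma symFormₛₗ_skew (x y : CV n) : symFormₛₗ n y x = -starRingEnd ℂ (symFormₛₗ n x y) := by
  rw [symFormₛₗ_apply, symFormₛₗ_apply, starRingEnd_apply, ← star_dotProduct_star, star_star,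
    star_mulVec, conjTranspose_J, ← dotProduct_mulVec, neg_mulVec, dotProduct_neg, neg_neg]

lemma symFormₛₗ_separatingLeft : (symFormₛₗ n).SeparatingLeft := fun x hx => by
  have hJx : J (Fin n) ℂ *ᵥ x = 0 := dotProduct_self_star_eq_zero.1 (hx (J (Fin n) ℂ *ᵥ x))
  have hJJx := congrArg (J (Fin n) ℂ *ᵥ ·) hJx
  simpa [J_squared, neg_mulVec] using hJJx

lemma eigenspace_brakeMatrix_one : End.eigenspace (brakeMatrix (Fin n) ℂ).mulVecLin 1 = LnN n := by
  ext x
  simp [brakeMatrix, LnN, funext_iff, fromBlocks_mulVec, LinearMap.funLeft_apply, neg_mulVec,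
    _root_.neg_eq_self]

lemma eigenspace_brakeMatrix_neg_one :
    End.eigenspace (brakeMatrix (Fin n) ℂ).mulVecLin (-1) = LnD n := by
  ext x
  simp [brakeMatrix, LnD, funext_iff, fromBlocks_mulVec, LinearMap.funLeft_apply, neg_mulVec,
    self_eq_neg]

lemma symFormₛₗ_mulVec_mulVec {A : Matrix (Fin n ⊕ Fin n) (Fin n ⊕ Fin n) ℂ} {c : ℂ}
    (hA : Aᴴ * J (Fin n) ℂ * A = c • J (Fin n) ℂ) (x y : CV n) :
    symFormₛₗ n (A *ᵥ x) (A *ᵥ y) = c * symFormₛₗ n x y := by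
  rw [symFormₛₗ_apply, symFormₛₗ_apply, star_mulVec, ← dotProduct_mulVec, mulVec_mulVec,
    mulVec_mulVec, hA, smul_mulVec, dotProduct_smul, smul_eq_mul]

lemma mulVecLin_brakeMatrix_mul_self :
    (brakeMatrix (Fin n) ℂ).mulVecLin * (brakeMatrix (Fin n) ℂ).mulVecLin = 1 := by
  rw [End.mul_eq_comp, ← mulVecLin_mul, brakeMatrix_mul_self, mulVecLin_one, End.one_eq_id]

lemma mulVecLin_map_ofReal_brake {M : Matrix (Fin n ⊕ Fin n) (Fin n ⊕ Fin n) ℝ}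
    (hM : Mᵀ * J (Fin n) ℝ * M = J (Fin n) ℝ)
    (hbrake : brakeMatrix (Fin n) ℝ * M * brakeMatrix (Fin n) ℝ = M⁻¹) :
    (brakeMatrix (Fin n) ℂ).mulVecLin * (M.map Complex.ofReal).mulVecLin *
      (brakeMatrix (Fin n) ℂ).mulVecLin * (M.map Complex.ofReal).mulVecLin = 1 := by
  simp only [End.mul_eq_comp, ← mulVecLin_mul, brakeMatrix_mul_map_ofReal hM hbrake,
    mulVecLin_one, End.one_eq_id]

lemma symFormₛₗ_brakeMatrix_mulVec (x y : CV n) :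
    symFormₛₗ n (brakeMatrix (Fin n) ℂ *ᵥ x) (brakeMatrix (Fin n) ℂ *ᵥ y) = -symFormₛₗ n x y := by
  rw [symFormₛₗ_mulVec_mulVec (c := -1), neg_one_mul]
  rw [conjTranspose_brakeMatrix_mul_J_mul, neg_one_smul]

lemma symFormₛₗ_map_ofReal_mulVec {M : Matrix (Fin n ⊕ Fin n) (Fin n ⊕ Fin n) ℝ}
    (hM : Mᵀ * J (Fin n) ℝ * M = J (Fin n) ℝ) (x y : CV n) :
    symFormₛₗ n (M.map Complex.ofReal *ᵥ x) (M.map Complex.ofReal *ᵥ y) = symFormₛₗ n x y := by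
  rw [symFormₛₗ_mulVec_mulVec (c := 1), one_mul]
  rw [conjTranspose_map_ofReal_mul_J_mul hM, one_smul]

lemma conj_notMem_of_im_pos {S : Finset ℂ} (hS : ∀ l ∈ S, 0 ≤ l.im) {l : ℂ} (hl : 0 < l.im) :
    starRingEnd ℂ l ∉ S := fun h => by
  have him := hS _ h
  rw [Complex.conj_im] at him
  linarith

end StandardSymplecticSpace

/-- For a brake-symmetric matrix `M ∈ Sp(2n)` (`N M N = M⁻¹`), with
`m⁺ = m⁺(𝔔(Gr(M),Λ_N;Λ_D))`, `d_N = dim(Gr(M)∩Λ_N)`, `d_D = dim(Gr(M)∩Λ_D)`: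
(i) the sum of `dim ker(M − λI)` over eigenvalues `λ` with `Im λ > 0` together
with `λ ∈ {1,−1}` is at most `m⁺ + d_N + d_D`; (ii) the sum over eigenvalues
with `Im λ > 0` is at most `m⁺ + d_D`. -/
theorem brake_eigenvalue_dim_estimates (n : ℕ)
    (M : Matrix (Fin n ⊕ Fin n) (Fin n ⊕ Fin n) ℝ)
    (hM : Mᵀ * Matrix.J (Fin n) ℝ * M = Matrix.J (Fin n) ℝ)
    (hbrake : fromBlocks (-1 : Matrix (Fin n) (Fin n) ℝ) 0 0 1 * M
        * fromBlocks (-1) 0 0 1 = M⁻¹) :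
    (∀ S : Finset ℂ, (∀ lam ∈ S, 0 < lam.im ∨ lam = 1 ∨ lam = -1) →
      ∑ lam ∈ S, Module.finrank ℂ
          ↥(LinearMap.ker ((M.map Complex.ofReal).mulVecLin
              - lam • (LinearMap.id : CV n →ₗ[ℂ] CV n)))
        ≤ posInd (symForm2 n)
            (LinearMap.graph ((M.map Complex.ofReal).mulVecLin)) (LN n) (LD n)
          + Module.finrank ℂ
              ↥(LinearMap.graph ((M.map Complex.ofReal).mulVecLin) ⊓ LN n)
          + Module.finrank ℂ
              ↥(LinearMap.graph ((M.map Complex.ofReal).mulVecLin) ⊓ LD n))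
    ∧ (∀ S : Finset ℂ, (∀ lam ∈ S, 0 < lam.im) →
      ∑ lam ∈ S, Module.finrank ℂ
          ↥(LinearMap.ker ((M.map Complex.ofReal).mulVecLin
              - lam • (LinearMap.id : CV n →ₗ[ℂ] CV n)))
        ≤ posInd (symForm2 n)
            (LinearMap.graph ((M.map Complex.ofReal).mulVecLin)) (LN n) (LD n)
          + Module.finrank ℂ
              ↥(LinearMap.graph ((M.map Complex.ofReal).mulVecLin) ⊓ LD n)) := by
  have h := brake_eigenvalue_dim_estimates_general
    (M := (M.map Complex.ofReal).mulVecLin) symFormₛₗ_skew symFormₛₗ_separatingLeft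
    mulVecLin_brakeMatrix_mul_self symFormₛₗ_brakeMatrix_mulVec (symFormₛₗ_map_ofReal_mulVec hM)
    (mulVecLin_map_ofReal_brake hM hbrake)
  rw [eigenspace_brakeMatrix_one, eigenspace_brakeMatrix_neg_one] at h
  simp only [finrank_ker_sub_smul_id]
  refine ⟨fun S hS => h.1 S fun l hl => ?_, fun S hS => le_add_right (h.2 S fun l hl => ?_)⟩
  · refine (hS l hl).imp_left fun hpos => conj_notMem_of_im_pos (fun m hm => ?_) hpos
    obtain hm | rfl | rfl := hS m hm
    exacts [hm.le, by simp, by simp]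
  · exact conj_notMem_of_im_pos (fun m hm => (hS m hm).le) (hS l hl)
end
end
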